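/- Right decomposition for E-separation: for every directed graph G = (V, E_d) and all subsets A, B, C ⊆ V, if (A, B, C) ∈ I_E^G and D ⊆ B, then (A, D, C) ∈ I_E^G. -/

import Mathlib

namespace ESepPaper

/-- A directed mixed graph: directed edges and bidirected edges over a node type `V`.
A directed graph (DG) is a DMG with `Ebi = ∅`. -/
structure DMG (V : Type) where
  Ed : Set (V × V)
  Ebi : Set (Sym2 V)

variable {V : Type}

/-- `G.ancestor u v` : there is a directed path `u → … → v` (possibly trivial). -/
def DMG.ancestor (G : DMG V) : V → V → Prop :=
  Relation.ReflTransGen (fun u v => (u, v) ∈ G.Ed)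

/-- Ancestors of a set `C`. -/
def DMG.anc (G : DMG V) (C : Set V) : Set V := {u | ∃ v ∈ C, G.ancestor u v}

/-- Strongly connected component of `v`. -/
def DMG.scc (G : DMG V) (v : V) : Set V := {w | G.ancestor w v ∧ G.ancestor v w}

/-- Parents of a set of nodes. -/
def DMG.pa (G : DMG V) (S : Set V) : Set V := {w | ∃ v ∈ S, (w, v) ∈ G.Ed}

/-- Kind of a traversed edge on a walk: forward directed, backward directed, or bidirected. -/
inductive LinkType | fwd | bwd | bi
deriving DecidableEq

/-- Validity of a link of kind `t` between consecutive walk nodes `u` and `v`. -/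
def DMG.linkOK (G : DMG V) (u v : V) : LinkType → Prop
  | .fwd => (u, v) ∈ G.Ed
  | .bwd => (v, u) ∈ G.Ed
  | .bi => s(u, v) ∈ G.Ebi

/-- Arrowhead at the second (right) endpoint of the link. -/
def LinkType.headR : LinkType → Prop
  | .fwd => True
  | .bwd => False
  | .bi => True

/-- Arrowhead at the first (left) endpoint of the link. -/
def LinkType.headL : LinkType → Prop
  | .fwd => False
  | .bwd => True
  | .bi => True

/-- Tail at the second (right) endpoint. -/
def LinkType.tailR (t : LinkType) : Prop := t = .bwd

/-- Tail at the first (left) endpoint. -/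
def LinkType.tailL (t : LinkType) : Prop := t = .fwd

/-- Walks in a DMG. -/
inductive DMG.Walk (G : DMG V) : V → V → Type
  | nil (v : V) : DMG.Walk G v v
  | cons {u v w : V} (t : LinkType) (h : G.linkOK u v t) (p : DMG.Walk G v w) : DMG.Walk G u w

/-- An interior node on a walk, whose incoming link is `t1` and outgoing link is `t2`,
is a collider iff both links have an arrowhead at it. -/
def colliderAt (t1 t2 : LinkType) : Prop := t1.headR ∧ t2.headL

/-- An interior non-collider `v` between neighbours `u` (incoming link `t1`) and `w`
(outgoing link `t2`) is unblockable: on every side where the link has a tail at `v`, the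
corresponding neighbour lies in `scc_G(v)` (left-chain/right-chain/fork cases). -/
def unblockableAt (G : DMG V) (u v w : V) (t1 t2 : LinkType) : Prop :=
  (t1.tailR → u ∈ G.scc v) ∧ (t2.tailL → w ∈ G.scc v)

namespace DMG.Walk

variable {G : DMG V}

/-- First node of a walk. -/
def first {a b : V} (_ : G.Walk a b) : V := a

def length : {a b : V} → G.Walk a b → ℕ
  | _, _, .nil _ => 0
  | _, _, .cons _ _ p => p.length + 1

def support : {a b : V} → G.Walk a b → List V
  | a, _, .nil _ => [a]
  | a, _, .cons _ _ p => a :: p.support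

/-- Auxiliary: σ-openness of the remainder of a walk, where `u` is the previous node and
`t1` the link from `u` into the current first node. -/
def sigmaOpenAux (C : Set V) : (u : V) → LinkType → {b c : V} → G.Walk b c → Prop
  | _, _, _, _, .nil _ => True
  | u, t1, v, _, .cons t2 _ q =>
      ((colliderAt t1 t2 → v ∈ G.anc C) ∧
       (¬ colliderAt t1 t2 → ¬ unblockableAt G u v q.first t1 t2 → v ∉ C)) ∧
      sigmaOpenAux C v t2 q

/-- The walk is σ-open given `C`: every collider on it is an ancestor of a node of `C`, and
no blockable non-collider on it lies in `C`. -/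
def sigmaOpen (C : Set V) : {a b : V} → G.Walk a b → Prop
  | _, _, .nil _ => True
  | a, _, .cons t _ q => sigmaOpenAux C a t q

/-- All links are forward directed. -/
def IsDirected : {a b : V} → G.Walk a b → Prop
  | _, _, .nil _ => True
  | _, _, .cons t _ p => t = .fwd ∧ p.IsDirected

/-- Interior nodes of the walk (all nodes except the two endpoints). -/
def interior {a b : V} (p : G.Walk a b) : List V := p.support.tail.dropLast

/-- Arrowhead at the first endpoint. -/
def headAtStart : {a b : V} → G.Walk a b → Prop
  | _, _, .nil _ => False
  | _, _, .cons t _ _ => t.headL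

def headAtEndAux : LinkType → {a b : V} → G.Walk a b → Prop
  | t, _, _, .nil _ => t.headR
  | _, _, _, .cons t _ q => headAtEndAux t q

/-- Arrowhead at the last endpoint. -/
def headAtEnd : {a b : V} → G.Walk a b → Prop
  | _, _, .nil _ => False
  | _, _, .cons t _ q => headAtEndAux t q

def noCollidersAux : LinkType → {a b : V} → G.Walk a b → Prop
  | _, _, _, .nil _ => True
  | t1, _, _, .cons t2 _ q => ¬ colliderAt t1 t2 ∧ noCollidersAux t2 q

/-- There is no collider on the walk. -/
def NoColliders : {a b : V} → G.Walk a b → Prop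
  | _, _, .nil _ => True
  | _, _, .cons t _ q => noCollidersAux t q

def collidersInAux (S : Set V) : LinkType → {a b : V} → G.Walk a b → Prop
  | _, _, _, .nil _ => True
  | t1, v, _, .cons t2 _ q => (colliderAt t1 t2 → v ∈ S) ∧ collidersInAux S t2 q

/-- Every collider on the walk lies in `S`. -/
def CollidersIn (S : Set V) : {a b : V} → G.Walk a b → Prop
  | _, _, .nil _ => True
  | _, _, .cons t _ q => collidersInAux S t q

def noncollUnblAux : (u : V) → LinkType → {b c : V} → G.Walk b c → Prop
  | _, _, _, _, .nil _ => True
  | u, t1, v, _, .cons t2 _ q =>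
      (¬ colliderAt t1 t2 → unblockableAt G u v q.first t1 t2) ∧ noncollUnblAux v t2 q

/-- Every interior non-collider on the walk is unblockable. -/
def NoncollidersUnblockable : {a b : V} → G.Walk a b → Prop
  | _, _, .nil _ => True
  | a, _, .cons t _ q => noncollUnblAux a t q

/-- The set of edges occurring on a walk (directed edges as ordered pairs in `E_d`,
bidirected edges as unordered pairs). -/
def edges : {a b : V} → G.Walk a b → Set ((V × V) ⊕ Sym2 V)
  | _, _, .nil _ => ∅
  | a, _, .cons t _ p =>
      insert (match t with
        | .fwd => Sum.inl (a, p.first)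
        | .bwd => Sum.inl (p.first, a)
        | .bi => Sum.inr s(a, p.first)) p.edges

/-- Concatenation of walks. -/
def append : {a b c : V} → G.Walk a b → G.Walk b c → G.Walk a c
  | _, _, _, .nil _, q => q
  | _, _, _, .cons t h p, q => .cons t h (p.append q)

/-- A walk `v_0, …, v_{n+1}` is a path if no node besides the final endpoint occurs more
than once, i.e. `v_0, …, v_n` are pairwise distinct. -/
def IsPath {a b : V} (p : G.Walk a b) : Prop := p.support.dropLast.Nodup

end DMG.Walk

/-- `A` is σ-separated from `B` given `C` in `G`: every walk from a node of `A` to a node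
of `B` is σ-blocked given `C`. -/
def DMG.sigmaSep (G : DMG V) (A B C : Set V) : Prop :=
  ∀ a ∈ A, ∀ b ∈ B, ∀ p : G.Walk a b, ¬ p.sigmaOpen C

/-- The lifted dependency graph of `G`, on two copies of `V`
(`Sum.inl` is the past copy `V_0`, `Sum.inr` the future copy `V_1`). -/
def DMG.lift (G : DMG V) : DMG (V ⊕ V) where
  Ed := {e | ∃ u v, (u, v) ∈ G.Ed ∧
        (e = (Sum.inl u, Sum.inl v) ∨ e = (Sum.inl u, Sum.inr v) ∨
         e = (Sum.inr u, Sum.inr v))}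
  Ebi := {e | ∃ u v, s(u, v) ∈ G.Ebi ∧
        (e = s(Sum.inl u, Sum.inl v) ∨ e = s(Sum.inl u, Sum.inr v) ∨
         e = s(Sum.inr u, Sum.inl v) ∨ e = s(Sum.inr u, Sum.inr v))}

/-- `B` is E-separated from `A` given `C` in `G`:
`A_0` is σ-separated from `B_1` given `C_0 ∪ (C_1 \ B_1)` in the lifted dependency graph. -/
def DMG.ESep (G : DMG V) (A B C : Set V) : Prop :=
  G.lift.sigmaSep (Sum.inl '' A) (Sum.inr '' B)
    ((Sum.inl '' C) ∪ ((Sum.inr '' C) \ (Sum.inr '' B)))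

/-- The independence model `I_E^G` of E-separation triples. -/
def DMG.IE (G : DMG V) : Set (Set V × Set V × Set V) :=
  {t | G.ESep t.1 t.2.1 t.2.2}


/-- The latent projection of `G` onto the observed nodes `O`: a directed edge when there is
a non-trivial directed walk whose interior nodes are all latent, and a bidirected edge when
there is a non-trivial collider-free walk with arrowheads at both endpoints whose interior
nodes are all latent. -/
def DMG.latentProj (G : DMG V) (O : Set V) : DMG O where
  Ed := {e | ∃ p : G.Walk e.1.val e.2.val,
          p.IsDirected ∧ 0 < p.length ∧ ∀ x ∈ p.interior, x ∉ O}
  Ebi := {e | ∃ u v : O, e = s(u, v) ∧ ∃ p : G.Walk u.val v.val,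
          p.headAtStart ∧ p.headAtEnd ∧ p.NoColliders ∧ 0 < p.length ∧
          ∀ x ∈ p.interior, x ∉ O}

/-- The last edge of the walk `p` before entering `scc_G(w)` has an arrowhead at its
endpoint in `scc_G(w)` (vacuous if the walk never leaves `scc_G(w)`). -/
def DMG.lastEdgeInto (G : DMG V) {a b : V} (w : V) (p : G.Walk a b) : Prop :=
  (∀ x ∈ p.support, x ∈ G.scc w) ∨
  ∃ (x y : V) (t : LinkType) (h : G.linkOK x y t) (p₁ : G.Walk a x) (p₂ : G.Walk y b),
    p = p₁.append (.cons t h p₂) ∧ x ∉ G.scc w ∧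
    (∀ z ∈ p₂.support, z ∈ G.scc w) ∧ t.headR

/-- An (asymmetric) inducing path from `v` to `w`: a non-trivial path such that every
collider on it is an ancestor of `v` or `w`, every interior non-collider is unblockable,
and the last edge before entering `scc_G(w)` points into `scc_G(w)`. -/
def DMG.IsInducingPath (G : DMG V) {v w : V} (p : G.Walk v w) : Prop :=
  0 < p.length ∧ p.IsPath ∧
  p.CollidersIn (G.anc {v, w}) ∧ p.NoncollidersUnblockable ∧ G.lastEdgeInto w p

/-!
Shrinking the target from `B` to `D` enlarges the conditioning set from
`T = C₀ ∪ (C₁ \ B₁)` to `S = C₀ ∪ (C₁ \ D₁)`, and every node gained lies in `B₁`. Take a walk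
into `D₁` that is σ-open given `S`. Its non-colliders are unaffected by passing to `T ⊆ S`, so
it can only be blocked given `T` at a collider that is not an ancestor of `T`. The first such
collider is an ancestor of `B₁`, and a directed path from it to `B₁` avoids `T` altogether.
Leaving the walk there along this path gives a walk into `B₁` that is σ-open given `T`.
-/

namespace DMG

variable (G : DMG V) {S T B : Set V} {u v : V}

theorem anc_mono (hST : S ⊆ T) : G.anc S ⊆ G.anc T :=
  fun _ ⟨w, hw, huw⟩ => ⟨w, hST hw, huw⟩

theorem anc_union : G.anc (S ∪ T) = G.anc S ∪ G.anc T := by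
  ext u
  simp only [anc, Set.mem_union, Set.mem_ofPred_eq, or_and_right, exists_or]

theorem subset_anc : T ⊆ G.anc T :=
  fun u hu => ⟨u, hu, .refl⟩

theorem mem_anc_of_mem_Ed (huv : (u, v) ∈ G.Ed) (hv : v ∈ G.anc T) : u ∈ G.anc T :=
  let ⟨w, hw, hvw⟩ := hv
  ⟨w, hw, .head huv hvw⟩

variable {G}

namespace Walk

theorem exists_sigmaOpenAux_of_ancestor {b : V} (hvb : G.ancestor v b) (hv : v ∉ G.anc T)
    (u : V) (t : LinkType) : ∃ q : G.Walk v b, q.sigmaOpenAux T u t := by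
  induction hvb using Relation.ReflTransGen.head_induction_on generalizing u t with
  | refl => exact ⟨.nil b, trivial⟩
  | @head v w hvw _ ih =>
    have hw : w ∉ G.anc T := fun hw => hv (G.mem_anc_of_mem_Ed hvw hw)
    have hvT : v ∉ T := fun hvT => hv (G.subset_anc hvT)
    obtain ⟨q, hq⟩ := ih hw v .fwd
    exact ⟨.cons .fwd hvw q, ⟨fun hcollider => hcollider.2.elim, fun _ _ => hvT⟩, hq⟩

theorem exists_sigmaOpenAux_of_subset {c : V} (hTS : T ⊆ S) (hSTB : S ⊆ T ∪ B)
    (q : G.Walk v c) (hc : c ∈ B) {t : LinkType} (hq : q.sigmaOpenAux S u t) :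
    ∃ b ∈ B, ∃ q' : G.Walk v b, q'.sigmaOpenAux T u t := by
  induction q generalizing u t with
  | nil c => exact ⟨c, hc, .nil c, trivial⟩
  | @cons v _ _ t' hlink q ih =>
    obtain ⟨⟨hcollider, hnoncollider⟩, hrest⟩ := hq
    by_cases hopen : colliderAt t t' → v ∈ G.anc T
    · obtain ⟨b, hb, q', hq'⟩ := ih hc hrest
      exact ⟨b, hb, .cons t' hlink q',
        ⟨hopen, fun hnc hblock hvT => hnoncollider hnc hblock (hTS hvT)⟩, hq'⟩
    · obtain ⟨htt', hvT⟩ := Classical.not_imp.mp hopen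
      have hv : v ∈ G.anc T ∪ G.anc B := G.anc_union ▸ G.anc_mono hSTB (hcollider htt')
      obtain ⟨b, hb, hvb⟩ := hv.resolve_left hvT
      exact ⟨b, hb, exists_sigmaOpenAux_of_ancestor hvb hvT u t⟩

theorem exists_sigmaOpen_of_subset {a c : V} (hTS : T ⊆ S) (hSTB : S ⊆ T ∪ B)
    (p : G.Walk a c) (hc : c ∈ B) (hp : p.sigmaOpen S) :
    ∃ b ∈ B, ∃ p' : G.Walk a b, p'.sigmaOpen T := by
  cases p with
  | nil => exact ⟨a, hc, .nil a, trivial⟩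
  | cons t hlink q =>
    obtain ⟨b, hb, q', hq'⟩ := exists_sigmaOpenAux_of_subset hTS hSTB q hc hp
    exact ⟨b, hb, .cons t hlink q', hq'⟩

end Walk

theorem sigmaSep.of_subset {A D : Set V} (hsep : G.sigmaSep A B T) (hDB : D ⊆ B)
    (hTS : T ⊆ S) (hSTB : S ⊆ T ∪ B) : G.sigmaSep A D S := by
  intro a ha d hd p hp
  obtain ⟨b, hb, p', hp'⟩ := p.exists_sigmaOpen_of_subset hTS hSTB (hDB hd) hp
  exact hsep a ha b hb p' hp'

end DMG

theorem right_decomposition_general (G : DMG V) {A B C D : Set V} (h : (A, B, C) ∈ G.IE)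
    (hD : D ⊆ B) : (A, D, C) ∈ G.IE := by
  have hDB : (Sum.inr '' D : Set (V ⊕ V)) ⊆ Sum.inr '' B := Set.image_mono hD
  refine DMG.sigmaSep.of_subset h hDB ?_ ?_
  · exact Set.union_subset_union_right _ (Set.sdiff_subset_sdiff_right hDB)
  · rw [Set.union_assoc]
    exact Set.union_subset_union_right _ (Set.sdiff_subset.trans (Set.subset_sdiff_union _ _))

/-- Right decomposition (RD) for E-separation. -/
theorem right_decomposition {V : Type} [Fintype V] (G : DMG V) (hG : G.Ebi = ∅)
    (A B C D : Set V) (h : (A, B, C) ∈ G.IE) (hD : D ⊆ B) :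
    (A, D, C) ∈ G.IE :=
  right_decomposition_general G h hD

end ESepPaper
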